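/- Let A and B be finite types and let J be a positive semidefinite matrix indexed by (A×B)×(A×B). Suppose there exists a matrix Y on (A×B)×(A×B) such that Y + J^{T_B} and Y − J^{T_B} are positive semidefinite and I_A − tr_B Y is positive semidefinite. Then for every density matrix ρ on A, the trace norm bound ‖((√ρ ⊗ I_B) J (√ρ ⊗ I_B))^{T_B}‖₁ ≤ 1 holds. (This says that every output state of a map in the Theta set lies in the Rains set PPT′.) -/

import Mathlib

open Matrix Kronecker ComplexOrder

/-- The Loewner order: `A ≤ B` iff `B - A` is positive semidefinite. -/
def Loewner {n : Type*} [Fintype n] (A B : Matrix n n ℂ) : Prop := (B - A).PosSemidef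

/-- Real matrix power via the spectral decomposition, with the convention `0 ^ β = 0`
(so negative powers are Moore–Penrose pseudo-inverses on the support); defined to be `0`
on non-Hermitian matrices. -/
noncomputable def mpow {n : Type*} [Fintype n] [DecidableEq n] (A : Matrix n n ℂ) (β : ℝ) :
    Matrix n n ℂ :=
  if hA : A.IsHermitian then
    (hA.eigenvectorUnitary : Matrix n n ℂ) *
      Matrix.diagonal (fun i =>
        (Complex.ofReal (if hA.eigenvalues i = 0 then 0 else (hA.eigenvalues i) ^ β))) *
      (star (hA.eigenvectorUnitary : Matrix n n ℂ))
  else 0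

/-- Matrix logarithm via the spectral decomposition (with `Real.log 0 = 0` on the kernel);
defined to be `0` on non-Hermitian matrices. -/
noncomputable def mlog {n : Type*} [Fintype n] [DecidableEq n] (A : Matrix n n ℂ) :
    Matrix n n ℂ :=
  if hA : A.IsHermitian then
    (hA.eigenvectorUnitary : Matrix n n ℂ) *
      Matrix.diagonal (fun i => (Complex.ofReal (Real.log (hA.eigenvalues i)))) *
      (star (hA.eigenvectorUnitary : Matrix n n ℂ))
  else 0

/-- Weighted matrix geometric mean `G_β(X,Y) = X^{1/2} (X^{-1/2} Y X^{-1/2})^β X^{1/2}`. -/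
noncomputable def geomMean {n : Type*} [Fintype n] [DecidableEq n] (β : ℝ)
    (X Y : Matrix n n ℂ) : Matrix n n ℂ :=
  mpow X (1/2) * mpow (mpow X (-(1/2)) * Y * mpow X (-(1/2))) β * mpow X (1/2)

/-- Operator relative entropy `D_op(X,Y) = X^{1/2} log(X^{1/2} Y⁻¹ X^{1/2}) X^{1/2}`. -/
noncomputable def Dop {n : Type*} [Fintype n] [DecidableEq n] (X Y : Matrix n n ℂ) :
    Matrix n n ℂ :=
  mpow X (1/2) * mlog (mpow X (1/2) * Y⁻¹ * mpow X (1/2)) * mpow X (1/2)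

/-- Geometric Rényi divergence `D̂_α(ρ‖σ) = (α-1)⁻¹ log tr G_{1-α}(ρ,σ)`. -/
noncomputable def Dhat {n : Type*} [Fintype n] [DecidableEq n] (α : ℝ)
    (ρ σ : Matrix n n ℂ) : ℝ :=
  (α - 1)⁻¹ * Real.log ((geomMean (1 - α) ρ σ).trace.re)

/-- Max-relative entropy `D_max(ρ‖σ) = log inf {t : ρ ≤ t σ}`. -/
noncomputable def Dmax {n : Type*} [Fintype n] (ρ σ : Matrix n n ℂ) : ℝ :=
  Real.log (sInf {t : ℝ | Loewner ρ (t • σ)})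

/-- Umegaki relative entropy `D(ρ‖σ) = tr[ρ (log ρ - log σ)]`. -/
noncomputable def Dum {n : Type*} [Fintype n] [DecidableEq n] (ρ σ : Matrix n n ℂ) : ℝ :=
  ((ρ * (mlog ρ - mlog σ)).trace).re

/-- Sandwiched Rényi divergence. -/
noncomputable def Dsand {n : Type*} [Fintype n] [DecidableEq n] (α : ℝ)
    (ρ σ : Matrix n n ℂ) : ℝ :=
  (α - 1)⁻¹ *
    Real.log ((mpow (mpow σ ((1 - α)/(2*α)) * ρ * mpow σ ((1 - α)/(2*α))) α).trace.re)

/-- Petz Rényi divergence. -/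
noncomputable def Dpetz {n : Type*} [Fintype n] [DecidableEq n] (α : ℝ)
    (ρ σ : Matrix n n ℂ) : ℝ :=
  (α - 1)⁻¹ * Real.log ((mpow ρ α * mpow σ (1 - α)).trace.re)

/-- Partial trace over the second tensor factor. -/
noncomputable def ptrB {A B : Type*} [Fintype B] (M : Matrix (A × B) (A × B) ℂ) :
    Matrix A A ℂ :=
  Matrix.of fun a a' => ∑ b, M (a, b) (a', b)

/-- Partial transpose on the second tensor factor. -/
def ptB {A B : Type*} (M : Matrix (A × B) (A × B) ℂ) : Matrix (A × B) (A × B) ℂ :=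
  Matrix.of fun x y => M (x.1, y.2) (y.1, x.2)

/-- Largest eigenvalue of a Hermitian matrix (`0` on non-Hermitian matrices). -/
noncomputable def lamMax {n : Type*} [Fintype n] [DecidableEq n] (M : Matrix n n ℂ) : ℝ :=
  if hM : M.IsHermitian then ⨆ i, hM.eigenvalues i else 0

/-- The action `Λ_J(ρ)` on the `A`-subsystem of the CP map with Choi matrix `J`. -/
noncomputable def chanApply {R A B : Type*} [Fintype A] (J : Matrix (A × B) (A × B) ℂ)
    (ρ : Matrix (R × A) (R × A) ℂ) : Matrix (R × B) (R × B) ℂ :=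
  Matrix.of fun x y => ∑ a, ∑ a', ρ (x.1, a) (y.1, a') * J (a, x.2) (a', y.2)

/-- Cone of separable operators: finite sums of Kronecker products of PSD matrices. -/
def SEPcone (A B : Type*) [Fintype A] [Fintype B] : Set (Matrix (A × B) (A × B) ℂ) :=
  { M | ∃ (k : ℕ) (P : Fin k → Matrix A A ℂ) (Q : Fin k → Matrix B B ℂ),
      (∀ i, (P i).PosSemidef) ∧ (∀ i, (Q i).PosSemidef) ∧ M = ∑ i, (P i) ⊗ₖ (Q i) }

/-- Trace norm `‖X‖₁ = tr √(X* X)`. -/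
noncomputable def traceNorm {n : Type*} [Fintype n] [DecidableEq n] (X : Matrix n n ℂ) : ℝ :=
  ((mpow (Xᴴ * X) (1/2)).trace).re

/-- Moore–Penrose pseudo-inverse of a PSD matrix. -/
noncomputable def mpinv {n : Type*} [Fintype n] [DecidableEq n] (M : Matrix n n ℂ) :
    Matrix n n ℂ :=
  mpow M (-1)

/-- Link product of Choi matrices (Choi matrix of the composed map). -/
noncomputable def linkProd {A B C : Type*} [Fintype B] (J₁ : Matrix (A × B) (A × B) ℂ)
    (J₂ : Matrix (B × C) (B × C) ℂ) : Matrix (A × C) (A × C) ℂ :=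
  Matrix.of fun x y => ∑ b, ∑ b', J₁ (x.1, b) (y.1, b') * J₂ (b, x.2) (b', y.2)

/-!
Since `√ρ ⊗ 1` acts trivially on `B`, conjugation by it commutes with the partial transpose on `B`.
It therefore turns `-Y ≤ J^{T_B} ≤ Y` into `-W ≤ X ≤ W`, where `X` is the operator whose trace norm
is sought and `W = (√ρ ⊗ 1) Y (√ρ ⊗ 1)`. In an eigenbasis of `X`, each `|λᵢ|` is bounded by the
`i`-th diagonal entry of `W`, so `‖X‖₁ ≤ tr W = tr (ρ tr_B Y) ≤ tr ρ`.
-/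

section PosSemidef

open scoped MatrixOrder

variable {n 𝕜 : Type*} [RCLike 𝕜]

lemma isHermitian_of_posSemidef_add_of_posSemidef_sub {W X : Matrix n n 𝕜}
    (hadd : (W + X).PosSemidef) (hsub : (W - X).PosSemidef) : X.IsHermitian := by
  have htwo : X + X = (W + X) - (W - X) := by abel
  have hX : X = (2⁻¹ : ℝ) • ((W + X) - (W - X)) := by
    rw [← htwo, ← two_smul ℝ X, inv_smul_smul₀ two_ne_zero]
  rw [hX]
  exact (hadd.isHermitian.sub hsub.isHermitian).smul (.all _)

lemma sum_abs_le_re_trace_of_posSemidef [Fintype n] [DecidableEq n] {W : Matrix n n 𝕜}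
    {d : n → ℝ} (hadd : (W + diagonal (RCLike.ofReal ∘ d)).PosSemidef)
    (hsub : (W - diagonal (RCLike.ofReal ∘ d)).PosSemidef) :
    ∑ i, |d i| ≤ RCLike.re W.trace := by
  rw [trace, map_sum]
  refine Finset.sum_le_sum fun i _ ↦ abs_le.2 ⟨?_, ?_⟩
  · simpa [neg_le_iff_add_nonneg'] using (RCLike.nonneg_iff.1 (hadd.diag_nonneg (i := i))).1
  · simpa using (RCLike.nonneg_iff.1 (hsub.diag_nonneg (i := i))).1

lemma trace_mul_nonneg_of_posSemidef [Fintype n] {P Q : Matrix n n 𝕜}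
    (hP : P.PosSemidef) (hQ : Q.PosSemidef) : 0 ≤ (P * Q).trace := by
  classical
  obtain ⟨K, rfl⟩ := CStarAlgebra.nonneg_iff_eq_star_mul_self.1 hP.nonneg
  rw [Matrix.mul_assoc, trace_mul_comm]
  exact (hQ.mul_mul_conjTranspose_same K).trace_nonneg

end PosSemidef

section TraceNorm

open scoped MatrixOrder

variable {n : Type*} [Fintype n] [DecidableEq n]

lemma mpow_eq_cfc (M : Matrix n n ℂ) (β : ℝ) :
    mpow M β = cfc (fun x : ℝ ↦ if x = 0 then 0 else x ^ β) M := by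
  by_cases hM : M.IsHermitian
  · rw [mpow, dif_pos hM, hM.cfc_eq]
    rfl
  · rw [mpow, dif_neg hM]
    exact (cfc_apply_of_not_predicate M hM).symm

lemma isHermitian_mpow (M : Matrix n n ℂ) (β : ℝ) : (mpow M β).IsHermitian := by
  rw [mpow_eq_cfc]
  exact cfc_predicate _ M

lemma mpow_one_half_eq_sqrt {M : Matrix n n ℂ} (hM : M.PosSemidef) :
    mpow M (1 / 2) = CFC.sqrt M := by
  rw [mpow_eq_cfc, CFC.sqrt_eq_real_sqrt M hM.nonneg, cfcₙ_eq_cfc]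
  congr! 2
  split_ifs with hx
  · rw [hx, Real.sqrt_zero]
  · rw [Real.sqrt_eq_rpow]

lemma mpow_one_half_mul_self {M : Matrix n n ℂ} (hM : M.PosSemidef) :
    mpow M (1 / 2) * mpow M (1 / 2) = M := by
  rw [mpow_one_half_eq_sqrt hM, CFC.sqrt_mul_sqrt_self M hM.nonneg]

lemma traceNorm_eq_re_trace_abs (X : Matrix n n ℂ) : traceNorm X = (CFC.abs X).trace.re := by
  rw [traceNorm, mpow_one_half_eq_sqrt (posSemidef_conjTranspose_mul_self X)]
  rfl

lemma traceNorm_eq_sum_abs_eigenvalues {X : Matrix n n ℂ} (hX : X.IsHermitian) :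
    traceNorm X = ∑ i, |hX.eigenvalues i| := by
  rw [traceNorm_eq_re_trace_abs, CFC.abs_eq_cfc_norm X hX, hX.cfc_eq, Matrix.IsHermitian.cfc,
    Unitary.conjStarAlgAut_apply, trace_mul_cycle, Unitary.coe_star_mul_self, one_mul,
    trace_diagonal, Complex.re_sum]
  rfl

theorem traceNorm_le_re_trace {W X : Matrix n n ℂ}
    (hadd : (W + X).PosSemidef) (hsub : (W - X).PosSemidef) : traceNorm X ≤ W.trace.re := by
  have hX : X.IsHermitian := isHermitian_of_posSemidef_add_of_posSemidef_sub hadd hsub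
  let U : Matrix n n ℂ := hX.eigenvectorUnitary
  have hdiag : Uᴴ * X * U = diagonal (RCLike.ofReal ∘ hX.eigenvalues) := by
    rw [← hX.conjStarAlgAut_star_eigenvectorUnitary, Unitary.conjStarAlgAut_star_apply]
    rfl
  have htrace : (Uᴴ * W * U).trace = W.trace := by
    have hU : U * Uᴴ = 1 := Unitary.coe_mul_star_self hX.eigenvectorUnitary
    rw [trace_mul_cycle, hU, one_mul]
  rw [traceNorm_eq_sum_abs_eigenvalues hX, ← htrace]
  refine sum_abs_le_re_trace_of_posSemidef (𝕜 := ℂ) ?_ ?_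
  · simpa only [← hdiag, Matrix.mul_add, Matrix.add_mul] using hadd.conjTranspose_mul_mul_same U
  · simpa only [← hdiag, Matrix.mul_sub, Matrix.sub_mul] using hsub.conjTranspose_mul_mul_same U

end TraceNorm

section PartialTranspose

variable {A B : Type*} [Fintype A] [Fintype B] [DecidableEq B]

lemma ptB_kronecker_one_mul_mul_kronecker_one (S T : Matrix A A ℂ)
    (M : Matrix (A × B) (A × B) ℂ) :
    ptB ((S ⊗ₖ (1 : Matrix B B ℂ)) * M * (T ⊗ₖ (1 : Matrix B B ℂ))) =
      (S ⊗ₖ (1 : Matrix B B ℂ)) * ptB M * (T ⊗ₖ (1 : Matrix B B ℂ)) := by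
  ext ⟨a, b⟩ ⟨a', b'⟩
  simp [ptB, Matrix.mul_apply, Fintype.sum_prod_type, Matrix.one_apply]

lemma trace_kronecker_one_mul (R : Matrix A A ℂ) (M : Matrix (A × B) (A × B) ℂ) :
    ((R ⊗ₖ (1 : Matrix B B ℂ)) * M).trace = (R * ptrB M).trace := by
  simp only [ptrB, Matrix.trace, diag_apply, Matrix.mul_apply, Fintype.sum_prod_type,
    kroneckerMap_apply, Matrix.one_apply, of_apply, mul_ite, mul_one, mul_zero, ite_mul, zero_mul,
    Finset.sum_ite_eq, Finset.mem_univ, if_true, Finset.mul_sum]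
  exact Finset.sum_congr rfl fun a _ ↦ Finset.sum_comm

theorem traceNorm_ptB_kronecker_one_conj_le [DecidableEq A] {J Y : Matrix (A × B) (A × B) ℂ}
    (hadd : (Y + ptB J).PosSemidef) (hsub : (Y - ptB J).PosSemidef) (S : Matrix A A ℂ) :
    traceNorm (ptB ((S ⊗ₖ (1 : Matrix B B ℂ)) * J * (Sᴴ ⊗ₖ (1 : Matrix B B ℂ)))) ≤
      (Sᴴ * S * ptrB Y).trace.re := by
  have hstar : (S ⊗ₖ (1 : Matrix B B ℂ))ᴴ = Sᴴ ⊗ₖ (1 : Matrix B B ℂ) := by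
    rw [conjTranspose_kronecker, conjTranspose_one]
  have htrace : ((S ⊗ₖ (1 : Matrix B B ℂ)) * Y * (Sᴴ ⊗ₖ (1 : Matrix B B ℂ))).trace =
      (Sᴴ * S * ptrB Y).trace := by
    rw [trace_mul_cycle, ← mul_kronecker_mul, Matrix.one_mul, trace_kronecker_one_mul]
  rw [ptB_kronecker_one_mul_mul_kronecker_one, ← htrace]
  apply traceNorm_le_re_trace
  · simpa only [hstar, Matrix.mul_add, Matrix.add_mul] using
      hadd.mul_mul_conjTranspose_same (S ⊗ₖ (1 : Matrix B B ℂ))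
  · simpa only [hstar, Matrix.mul_sub, Matrix.sub_mul] using
      hsub.mul_mul_conjTranspose_same (S ⊗ₖ (1 : Matrix B B ℂ))

end PartialTranspose

theorem theta_output_in_rains_set_general {A B : Type*} [Fintype A] [DecidableEq A]
    [Fintype B] [DecidableEq B] {J Y : Matrix (A × B) (A × B) ℂ}
    (hadd : (Y + ptB J).PosSemidef) (hsub : (Y - ptB J).PosSemidef)
    (hY : ((1 : Matrix A A ℂ) - ptrB Y).PosSemidef) {ρ : Matrix A A ℂ} (hρ : ρ.PosSemidef) :
    traceNorm (ptB ((mpow ρ (1/2) ⊗ₖ (1 : Matrix B B ℂ)) * J *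
      (mpow ρ (1/2) ⊗ₖ (1 : Matrix B B ℂ)))) ≤ ρ.trace.re := by
  have hgap : 0 ≤ (ρ * (1 - ptrB Y)).trace.re :=
    (Complex.le_def.1 (trace_mul_nonneg_of_posSemidef hρ hY)).1
  rw [Matrix.mul_sub, Matrix.mul_one, trace_sub, Complex.sub_re, sub_nonneg] at hgap
  refine le_trans ?_ hgap
  simpa only [(isHermitian_mpow ρ (1/2)).eq, mpow_one_half_mul_self hρ] using
    traceNorm_ptB_kronecker_one_conj_le hadd hsub (mpow ρ (1/2))

/-- every output state of a map in the Theta set lies in the Rains set: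
`‖((√ρ ⊗ I_B) J (√ρ ⊗ I_B))^{T_B}‖₁ ≤ 1` for every density matrix `ρ` on `A`. -/
theorem theta_output_in_rains_set {A B : Type*} [Fintype A] [DecidableEq A]
    [Fintype B] [DecidableEq B]
    (J : Matrix (A × B) (A × B) ℂ) (hJ : J.PosSemidef)
    (Y : Matrix (A × B) (A × B) ℂ)
    (h1 : (Y + ptB J).PosSemidef) (h2 : (Y - ptB J).PosSemidef)
    (h3 : ((1 : Matrix A A ℂ) - ptrB Y).PosSemidef) :
    ∀ ρ : Matrix A A ℂ, ρ.PosSemidef → ρ.trace = 1 →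
      traceNorm (ptB ((mpow ρ (1/2) ⊗ₖ (1 : Matrix B B ℂ)) * J *
        (mpow ρ (1/2) ⊗ₖ (1 : Matrix B B ℂ)))) ≤ 1 := by
  intro ρ hρ htr
  simpa only [htr, Complex.one_re] using theta_output_in_rains_set_general h1 h2 h3 hρ
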